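/- arXiv:2407.11465 — 8 statements merged into one kernel-verified Lean document; each statement's English description precedes it below -/
import Mathlib

section
/- Suppose β_t ≥ 0 pointwise for every t and that L := sup_t E[L_t] < ∞. Then the wealth process {W_t} is a (1 + L, 0)-sequential tail evidence against P: for all x > 0, P(sup_t W_t ≥ x) ≤ (1 + L)/x. -/
open MeasureTheory

/-- If borrowings are nonnegative and `Lconst = sup_t E[L_t] < ∞`, then the wealth process
is a `(1 + Lconst, 0)`-sequential tail evidence against `P`. -/
theorem wealth_sequential_tail_evidence_of_bounded_expected_liabilities
    {Ω : Type*} {mΩ : MeasurableSpace Ω} {μ : Measure Ω} [IsProbabilityMeasure μ]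
    (ℱ : Filtration ℕ mΩ)
    (X lam β W L N : ℕ → Ω → ℝ)
    (hX_val : ∀ t ω, X (t + 1) ω = 1 ∨ X (t + 1) ω = -1)
    (hX_meas : ∀ t, StronglyMeasurable[ℱ (t + 1)] (X (t + 1)))
    (hX_cond : ∀ t, μ[X (t + 1) | ℱ t] =ᵐ[μ] 0)
    (hlam_pred : ∀ t, StronglyMeasurable[ℱ t] (lam (t + 1)))
    (hlam_bdd : ∀ t ω, lam (t + 1) ω ∈ Set.Icc (-1 : ℝ) 1)
    (hβ_pred : ∀ t, StronglyMeasurable[ℱ t] (β (t + 1)))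
    (hβ_int : ∀ t, Integrable (β (t + 1)) μ)
    (hβ_lb : ∀ t ω, -(W t ω) ≤ β (t + 1) ω)
    (hW0 : ∀ ω, W 0 ω = 1)
    (hW : ∀ t ω, W (t + 1) ω = (W t ω + β (t + 1) ω) * (1 + lam (t + 1) ω * X (t + 1) ω))
    (hL : ∀ t ω, L t ω = ∑ i ∈ Finset.range t, β (i + 1) ω)
    (hN : ∀ t ω, N t ω = W t ω - L t ω)
    (hβ_nonneg : ∀ t ω, 0 ≤ β (t + 1) ω)
    (hbdd : BddAbove (Set.range fun t => ∫ ω, L t ω ∂μ))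
    (Lconst : ℝ) (hLconst : Lconst = ⨆ t, ∫ ω, L t ω ∂μ) :
    ∀ x : ℝ, 0 < x →
      μ {ω | (x : EReal) ≤ ⨆ t, (W t ω : EReal)} ≤ ENNReal.ofReal ((1 + Lconst) / x) := by
  have hWnn : ∀ t ω, 0 ≤ W t ω := by
    intro t
    induction t with
    | zero => intro ω; rw [hW0]; norm_num
    | succ t ih =>
      intro ω
      rw [hW]
      refine mul_nonneg (add_nonneg (ih ω) (hβ_nonneg t ω)) ?_
      have h := hlam_bdd t ω
      rcases hX_val t ω with h1 | h1 <;> rw [h1] <;> linarith [h.1, h.2]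
  have hadp : StronglyAdapted ℱ W := by
    intro t
    induction t with
    | zero =>
      have : W 0 = fun _ => (1 : ℝ) := funext hW0
      rw [this]; exact stronglyMeasurable_const
    | succ t ih =>
      have : W (t + 1) = (W t + β (t + 1)) * (1 + lam (t + 1) * X (t + 1)) := by
        ext ω; simp [hW]
      rw [this]
      have hle := ℱ.mono (Nat.le_succ t)
      exact ((ih.mono hle).add ((hβ_pred t).mono hle)).mul
        (stronglyMeasurable_one.add (((hlam_pred t).mono hle).mul (hX_meas t)))
  have hXi : ∀ t, Integrable (X (t + 1)) μ := by
    intro t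
    refine Integrable.of_bound ((hX_meas t).mono (ℱ.le _)).aestronglyMeasurable 1 ?_
    refine Filter.Eventually.of_forall fun ω => ?_
    rcases hX_val t ω with h1 | h1 <;> rw [h1] <;> simp
  have hstep : ∀ t, Integrable (W t) μ →
      Integrable ((W t + β (t + 1)) * lam (t + 1) * X (t + 1)) μ := by
    intro t ht
    rw [mul_assoc]
    have hm : AEStronglyMeasurable (lam (t + 1) * X (t + 1)) μ :=
      (((hlam_pred t).mono (ℱ.le _)).mul ((hX_meas t).mono (ℱ.le _))).aestronglyMeasurable
    refine (ht.add (hβ_int t)).mul_bdd (c := 1) hm ?_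
    refine Filter.Eventually.of_forall fun ω => ?_
    have h := hlam_bdd t ω
    have h2 : |lam (t + 1) ω| ≤ 1 := abs_le.2 h
    rcases hX_val t ω with h1 | h1 <;> simp [h1, h2]
  have hdec : ∀ t, W (t + 1) = (W t + β (t + 1)) + (W t + β (t + 1)) * lam (t + 1) * X (t + 1) := by
    intro t; ext ω; simp [hW]; ring
  have hint : ∀ t, Integrable (W t) μ := by
    intro t
    induction t with
    | zero =>
      have : W 0 = fun _ => (1 : ℝ) := funext hW0
      rw [this]; exact integrable_const _
    | succ t ih =>
      rw [hdec]
      exact (ih.add (hβ_int t)).add (hstep t ih)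
  have hce : ∀ t, μ[W (t + 1) | ℱ t] =ᵐ[μ] W t + β (t + 1) := by
    intro t
    have hsm : StronglyMeasurable[ℱ t] (W t + β (t + 1)) := (hadp t).add (hβ_pred t)
    have h1 := condExp_add ((hint t).add (hβ_int t)) (hstep t (hint t)) (ℱ t)
    have h2 := condExp_mul_of_stronglyMeasurable_left (hsm.mul (hlam_pred t)) (hstep t (hint t))
      (hXi t)
    have h3 := condExp_of_stronglyMeasurable (ℱ.le t) hsm ((hint t).add (hβ_int t))
    rw [← hdec, h3] at h1
    filter_upwards [h1, h2, hX_cond t] with ω a b c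
    rw [a, Pi.add_apply, b, Pi.mul_apply, c]
    simp
  have hsub : Submartingale W ℱ μ := by
    refine submartingale_nat hadp hint fun t => ?_
    filter_upwards [hce t] with ω h
    rw [h, Pi.add_apply]
    linarith [hβ_nonneg t ω]
  have hEW : ∀ t, ∫ ω, W t ω ∂μ = 1 + ∫ ω, L t ω ∂μ := by
    intro t
    induction t with
    | zero => simp [hW0, hL]
    | succ t ih =>
      have hLi : Integrable (L t) μ := by
        have : L t = fun ω => ∑ i ∈ Finset.range t, β (i + 1) ω := funext (hL t)
        rw [this]
        exact integrable_finsetSum _ fun i _ => hβ_int i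
      have e1 : ∫ ω, W (t + 1) ω ∂μ = ∫ ω, (W t ω + β (t + 1) ω) ∂μ := by
        rw [← integral_condExp (ℱ.le t)]
        exact integral_congr_ae (hce t)
      have e2 : ∀ ω, L (t + 1) ω = L t ω + β (t + 1) ω := by
        intro ω; rw [hL, hL, Finset.sum_range_succ]
      simp_rw [e2]
      rw [e1, integral_add (hint t) (hβ_int t), integral_add hLi (hβ_int t), ih, add_assoc]
  have hEle : ∀ t, ∫ ω, W t ω ∂μ ≤ 1 + Lconst := by
    intro t
    rw [hEW, hLconst]
    have := le_ciSup hbdd t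
    linarith
  have hC : 0 ≤ 1 + Lconst := (integral_nonneg (hWnn 0)).trans (hEle 0)
  have hfin : ∀ y : ℝ, 0 < y → ∀ n : ℕ, μ {ω | ∃ k ≤ n, y ≤ W k ω} ≤
      ENNReal.ofReal ((1 + Lconst) / y) := by
    intro y hy n
    lift y to NNReal using hy.le
    have h := maximal_ineq hsub hWnn (ε := y) n
    have hset : {ω | ∃ k ≤ n, (y : ℝ) ≤ W k ω} = {ω | (y : ℝ) ≤
        (Finset.range (n + 1)).sup' Finset.nonempty_range_add_one fun k => W k ω} := by
      ext ω
      simp [Finset.le_sup'_iff]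
    rw [← hset] at h
    have h2 : ENNReal.ofReal (∫ ω in {ω | ∃ k ≤ n, y ≤ W k ω}, W n ω ∂μ) ≤
        ENNReal.ofReal (1 + Lconst) := by
      refine ENNReal.ofReal_le_ofReal (le_trans ?_ (hEle n))
      exact setIntegral_le_integral (hint n) (Filter.Eventually.of_forall (hWnn n))
    have h3 := h.trans h2
    rw [← ENNReal.ofReal_coe_nnreal] at h3
    rw [ENNReal.ofReal_div_of_pos hy, ENNReal.le_div_iff_mul_le
      (Or.inl (ENNReal.ofReal_pos.2 hy |>.ne')) (Or.inl ENNReal.ofReal_ne_top), mul_comm]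
    exact h3
  have hall : ∀ y : ℝ, 0 < y → μ {ω | ∃ k, y ≤ W k ω} ≤ ENNReal.ofReal ((1 + Lconst) / y) := by
    intro y hy
    have hset : {ω | ∃ k, y ≤ W k ω} = ⋃ n : ℕ, {ω | ∃ k ≤ n, y ≤ W k ω} := by
      ext ω
      simp only [Set.mem_iUnion, Set.mem_ofPred_eq]
      exact ⟨fun ⟨k, hk⟩ => ⟨k, k, le_rfl, hk⟩, fun ⟨_, k, _, hk⟩ => ⟨k, hk⟩⟩
    have hmono : Monotone fun n : ℕ => {ω | ∃ k ≤ n, y ≤ W k ω} := by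
      intro a b hab ω
      rintro ⟨k, hk, h⟩
      exact ⟨k, hk.trans hab, h⟩
    rw [hset, hmono.measure_iUnion]
    exact iSup_le (hfin y hy)
  intro x hx
  have hlim : Filter.Tendsto (fun y : ℝ => ENNReal.ofReal ((1 + Lconst) / y))
      (nhdsWithin x (Set.Iio x)) (nhds (ENNReal.ofReal ((1 + Lconst) / x))) := by
    refine ENNReal.tendsto_ofReal (Filter.Tendsto.mono_left ?_ nhdsWithin_le_nhds)
    exact tendsto_const_nhds.div Filter.tendsto_id hx.ne'
  refine ge_of_tendsto hlim ?_
  have hev : ∀ᶠ y in nhdsWithin x (Set.Iio x), 0 < y :=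
    nhdsWithin_le_nhds (lt_mem_nhds hx)
  filter_upwards [hev, self_mem_nhdsWithin] with y hy hyx
  refine le_trans (measure_mono ?_) (hall y hy)
  intro ω hω
  have hlt : (y : EReal) < ⨆ t, (W t ω : EReal) :=
    lt_of_lt_of_le (EReal.coe_lt_coe_iff.2 hyx) hω
  obtain ⟨k, hk⟩ := lt_iSup_iff.1 hlt
  exact ⟨k, (EReal.coe_lt_coe_iff.1 hk).le⟩
end

section
/- Suppose B := sup_t E[Σ_{i=1}^t β_i^+] < ∞, where β_i^+ = max(β_i, 0) is the positive part. Then the wealth process {W_t} is a (1 + B, 0)-sequential tail evidence against P: for all x > 0, P(sup_t W_t ≥ x) ≤ (1 + B)/x. -/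
open MeasureTheory

/-- If `B = sup_t E[Σ_{i=1}^t β_i⁺] < ∞`, then the wealth process is a
`(1 + B, 0)`-sequential tail evidence against `P`. -/
theorem wealth_sequential_tail_evidence_of_bounded_expected_positive_borrowings
    {Ω : Type*} {mΩ : MeasurableSpace Ω} {μ : Measure Ω} [IsProbabilityMeasure μ]
    (ℱ : Filtration ℕ mΩ)
    (X lam β W L N : ℕ → Ω → ℝ)
    (hX_val : ∀ t ω, X (t + 1) ω = 1 ∨ X (t + 1) ω = -1)
    (hX_meas : ∀ t, StronglyMeasurable[ℱ (t + 1)] (X (t + 1)))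
    (hX_cond : ∀ t, μ[X (t + 1) | ℱ t] =ᵐ[μ] 0)
    (hlam_pred : ∀ t, StronglyMeasurable[ℱ t] (lam (t + 1)))
    (hlam_bdd : ∀ t ω, lam (t + 1) ω ∈ Set.Icc (-1 : ℝ) 1)
    (hβ_pred : ∀ t, StronglyMeasurable[ℱ t] (β (t + 1)))
    (hβ_int : ∀ t, Integrable (β (t + 1)) μ)
    (hβ_lb : ∀ t ω, -(W t ω) ≤ β (t + 1) ω)
    (hW0 : ∀ ω, W 0 ω = 1)
    (hW : ∀ t ω, W (t + 1) ω = (W t ω + β (t + 1) ω) * (1 + lam (t + 1) ω * X (t + 1) ω))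
    (hL : ∀ t ω, L t ω = ∑ i ∈ Finset.range t, β (i + 1) ω)
    (hN : ∀ t ω, N t ω = W t ω - L t ω)
    (hbdd : BddAbove (Set.range fun t => ∫ ω, ∑ i ∈ Finset.range t, max (β (i + 1) ω) 0 ∂μ))
    (B : ℝ) (hB : B = ⨆ t, ∫ ω, ∑ i ∈ Finset.range t, max (β (i + 1) ω) 0 ∂μ) :
    ∀ x : ℝ, 0 < x →
      μ {ω | (x : EReal) ≤ ⨆ t, (W t ω : EReal)} ≤ ENNReal.ofReal ((1 + B) / x) := by
  intro x hx
  have hXm : ∀ t, Integrable (X (t + 1)) μ := by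
    intro t
    refine Integrable.of_bound (C := 1) (((hX_meas t).mono (ℱ.le _)).aestronglyMeasurable) ?_
    filter_upwards with ω
    rcases hX_val t ω with h | h <;> simp [h]
  have hWfun : ∀ t, W (t + 1) = (W t + β (t + 1)) * (1 + lam (t + 1) * X (t + 1)) := by
    intro t; funext ω; simpa using hW t ω
  have hWm : ∀ t, StronglyMeasurable[ℱ t] (W t) := by
    intro t
    induction t with
    | zero =>
      have : W 0 = fun _ => (1 : ℝ) := funext hW0
      rw [this]; exact stronglyMeasurable_const
    | succ t ih =>
      rw [hWfun]
      have hle : ℱ t ≤ ℱ (t + 1) := ℱ.mono (Nat.le_succ t)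
      exact ((ih.mono hle).add ((hβ_pred t).mono hle)).mul
        (stronglyMeasurable_one.add (((hlam_pred t).mono hle).mul (hX_meas t)))
  have hfac : ∀ t ω, ‖1 + lam (t + 1) ω * X (t + 1) ω‖ ≤ 2 := by
    intro t ω
    obtain ⟨h1, h2⟩ := hlam_bdd t ω
    rw [Real.norm_eq_abs, abs_le]
    rcases hX_val t ω with h | h <;> rw [h] <;> constructor <;> linarith
  have hWint : ∀ t, Integrable (W t) μ := by
    intro t
    induction t with
    | zero =>
      have : W 0 = fun _ => (1 : ℝ) := funext hW0
      rw [this]; exact integrable_const _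
    | succ t ih =>
      rw [hWfun]
      refine (ih.add (hβ_int t)).mul_bdd (c := 2) ?_ ?_
      · have hle : ℱ t ≤ ℱ (t + 1) := ℱ.mono (Nat.le_succ t)
        exact ((stronglyMeasurable_one.add (((hlam_pred t).mono hle).mul (hX_meas t))).mono
          (ℱ.le _)).aestronglyMeasurable
      · filter_upwards with ω
        simpa using hfac t ω
  have hbp : ∀ t, Integrable (fun ω => max (β (t + 1) ω) 0) μ := fun t => (hβ_int t).pos_part
  -- main step
  have hstep : ∀ t (G : Set Ω), MeasurableSet[ℱ t] G →
      ∫ ω in G, W (t + 1) ω ∂μ ≤ ∫ ω in G, W t ω ∂μ + ∫ ω, max (β (t + 1) ω) 0 ∂μ := by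
    intro t G hG
    have hG' : MeasurableSet G := ℱ.le t _ hG
    set f : Ω → ℝ := (W t + β (t + 1)) * lam (t + 1) with hf
    have hfm : StronglyMeasurable[ℱ t] f := ((hWm t).add (hβ_pred t)).mul (hlam_pred t)
    have hfint : Integrable f μ := by
      refine ((hWint t).add (hβ_int t)).mul_bdd (c := 1)
        ((hlam_pred t).mono (ℱ.le _)).aestronglyMeasurable ?_
      filter_upwards with ω
      exact abs_le.2 (hlam_bdd t ω)
    have hfX : Integrable (f * X (t + 1)) μ := by
      refine hfint.mul_bdd (c := 1) (((hX_meas t).mono (ℱ.le _)).aestronglyMeasurable) ?_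
      filter_upwards with ω
      rcases hX_val t ω with h | h <;> simp [h]
    have hce : μ[f * X (t + 1) | ℱ t] =ᵐ[μ] 0 := by
      have h1 := condExp_mul_of_stronglyMeasurable_left hfm hfX (hXm t)
      filter_upwards [h1, hX_cond t] with ω h1 h2
      rw [h1]; simp [h2]
    have hz : ∫ ω in G, (f * X (t + 1)) ω ∂μ = 0 := by
      rw [← setIntegral_condExp (ℱ.le t) hfX hG]
      rw [integral_congr_ae (ae_restrict_of_ae hce)]
      simp
    have he : ∫ ω in G, W (t + 1) ω ∂μ
        = ∫ ω in G, W t ω ∂μ + ∫ ω in G, β (t + 1) ω ∂μ + ∫ ω in G, (f * X (t + 1)) ω ∂μ := by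
      rw [← integral_add (hWint t).integrableOn (hβ_int t).integrableOn,
        ← integral_add (f := fun a => W t a + β (t + 1) a) ((hWint t).add (hβ_int t)).integrableOn hfX.integrableOn]
      refine integral_congr_ae ?_
      filter_upwards with ω
      simp only [hW, hf, Pi.mul_apply, Pi.add_apply]
      ring
    have h1 : ∫ ω in G, β (t + 1) ω ∂μ ≤ ∫ ω in G, max (β (t + 1) ω) 0 ∂μ :=
      integral_mono (hβ_int t).integrableOn (hbp t).integrableOn (fun ω => le_max_left _ _)
    have h2 : ∫ ω in G, max (β (t + 1) ω) 0 ∂μ ≤ ∫ ω, max (β (t + 1) ω) 0 ∂μ :=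
      setIntegral_le_integral (hbp t) (Filter.Eventually.of_forall fun ω => le_max_right _ _)
    linarith
  have hWnn : ∀ t ω, 0 ≤ W t ω := by
    intro t ω
    cases t with
    | zero => rw [hW0]; exact zero_le_one
    | succ t =>
      rw [hW]
      refine mul_nonneg (by linarith [hβ_lb t ω]) ?_
      obtain ⟨h1, h2⟩ := hlam_bdd t ω
      rcases hX_val t ω with h | h <;> rw [h] <;> linarith
  have hfin : ∀ y : ℝ, 0 < y → ∀ t, μ.real {ω | ∃ s ≤ t, y ≤ W s ω} ≤ (1 + B) / y := by
    intro y hy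
    have hEm : ∀ t, MeasurableSet[ℱ t] {ω | ∃ s ≤ t, y ≤ W s ω} := by
      intro t
      have : {ω | ∃ s ≤ t, y ≤ W s ω} = ⋃ s ∈ Set.Iic t, {ω | y ≤ W s ω} := by
        ext ω; simp
      rw [this]
      refine MeasurableSet.biUnion (Set.to_countable _) fun s hs => ?_
      exact ℱ.mono hs _ (measurableSet_le measurable_const (hWm s).measurable)
    have key : ∀ t, y * μ.real {ω | ∃ s ≤ t, y ≤ W s ω}
        + ∫ ω in {ω | ∃ s ≤ t, y ≤ W s ω}ᶜ, W t ω ∂μ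
        ≤ 1 + ∫ ω, ∑ i ∈ Finset.range t, max (β (i + 1) ω) 0 ∂μ := by
      have hmark : ∀ (F : Set Ω) (g : Ω → ℝ), MeasurableSet F → Integrable g μ →
          (∀ ω ∈ F, y ≤ g ω) → y * μ.real F ≤ ∫ ω in F, g ω ∂μ := by
        intro F g hF hg hle
        have := setIntegral_mono_on (μ := μ) (integrable_const y).integrableOn hg.integrableOn hF hle
        simpa [mul_comm] using this
      intro t
      induction t with
      | zero =>
        have hm := (ℱ.le _ _ (hEm 0))
        have h1 := hmark _ (W 0) hm (hWint 0) (by rintro ω ⟨s, hs, h⟩; obtain rfl : s = 0 := by omega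
                                                  exact h)
        have h2 := integral_add_compl hm (hWint 0)
        have h3 : ∫ ω, W 0 ω ∂μ = 1 := by simp [hW0]
        simp only [Finset.range_zero, Finset.sum_empty, integral_zero]
        linarith
      | succ t ih =>
        set E := {ω | ∃ s ≤ t, y ≤ W s ω} with hE
        set E' := {ω | ∃ s ≤ t + 1, y ≤ W s ω} with hE'
        have hm : MeasurableSet E := (ℱ.le _ _ (hEm t))
        have hm' : MeasurableSet E' := (ℱ.le _ _ (hEm (t + 1)))
        have hsub : E ⊆ E' := fun ω ⟨s, hs, h⟩ => ⟨s, by omega, h⟩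
        have h1 := hmark (E' \ E) (W (t + 1)) (hm'.diff hm) (hWint _) (by
          rintro ω ⟨⟨s, hs, h⟩, hn⟩
          rcases Nat.lt_or_ge t s with hl | hl
          · obtain rfl : s = t + 1 := by omega
            exact h
          · exact absurd ⟨s, hl, h⟩ hn)
        have h2 : μ.real E' = μ.real E + μ.real (E' \ E) := by
          rw [measureReal_diff hsub hm]; ring
        have h3 : ∫ ω in Eᶜ, W (t + 1) ω ∂μ
            = ∫ ω in E' \ E, W (t + 1) ω ∂μ + ∫ ω in E'ᶜ, W (t + 1) ω ∂μ := by
          rw [← setIntegral_union _ hm'.compl (hWint _).integrableOn (hWint _).integrableOn]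
          · congr 2
            ext ω
            have := @hsub ω
            simp only [Set.mem_compl_iff, Set.mem_union, Set.mem_diff]
            tauto
          · exact Set.disjoint_left.2 fun ω h h' => h' h.1
        have h4 := hstep t Eᶜ (hEm t).compl
        have h5 : ∫ ω, ∑ i ∈ Finset.range (t + 1), max (β (i + 1) ω) 0 ∂μ
            = ∫ ω, ∑ i ∈ Finset.range t, max (β (i + 1) ω) 0 ∂μ
              + ∫ ω, max (β (t + 1) ω) 0 ∂μ := by
          simp only [Finset.sum_range_succ]
          exact integral_add (integrable_finsetSum _ fun i _ => hbp i) (hbp t)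
        rw [h2, h5, mul_add]
        linarith
    intro t
    have h1 : ∫ ω, ∑ i ∈ Finset.range t, max (β (i + 1) ω) 0 ∂μ ≤ B := by
      rw [hB]; exact le_ciSup hbdd t
    have h2 : 0 ≤ ∫ ω in {ω | ∃ s ≤ t, y ≤ W s ω}ᶜ, W t ω ∂μ :=
      integral_nonneg (hWnn t)
    rw [le_div_iff₀ hy]
    linarith [key t]
  have hall : ∀ y : ℝ, 0 < y → μ {ω | ∃ s, y ≤ W s ω} ≤ ENNReal.ofReal ((1 + B) / y) := by
    intro y hy
    have : {ω | ∃ s, y ≤ W s ω} = ⋃ t : ℕ, {ω | ∃ s ≤ t, y ≤ W s ω} := by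
      ext ω
      simp only [Set.mem_setOf_eq, Set.mem_iUnion]
      exact ⟨fun ⟨s, h⟩ => ⟨s, s, le_rfl, h⟩, fun ⟨_, s, _, h⟩ => ⟨s, h⟩⟩
    rw [this, Monotone.measure_iUnion]
    · refine iSup_le fun t => ?_
      rw [← ofReal_measureReal]
      exact ENNReal.ofReal_le_ofReal (hfin y hy t)
    · intro a b hab ω ⟨s, hs, h⟩
      exact ⟨s, hs.trans hab, h⟩
  have hlim : Filter.Tendsto (fun y : ℝ => ENNReal.ofReal ((1 + B) / y)) (nhdsWithin x (Set.Iio x))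
      (nhds (ENNReal.ofReal ((1 + B) / x))) := by
    refine ENNReal.tendsto_ofReal (Filter.Tendsto.mono_left ?_ nhdsWithin_le_nhds)
    exact tendsto_const_nhds.div Filter.tendsto_id hx.ne'
  refine ge_of_tendsto hlim ?_
  filter_upwards [Ioo_mem_nhdsLT hx] with y hy
  refine le_trans (measure_mono ?_) (hall y hy.1)
  intro ω hω
  have h1 : (y : EReal) < ⨆ t, (W t ω : EReal) :=
    lt_of_lt_of_le (EReal.coe_lt_coe_iff.2 hy.2) hω
  obtain ⟨s, hs⟩ := lt_iSup_iff.1 h1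
  exact ⟨s, (EReal.coe_lt_coe_iff.1 hs).le⟩
end

section
/- Let N_min < 1 be a non-random number such that N_t ≥ N_min almost surely for all t. Then the net wealth process {N_t} is a (1 − N_min, N_min)-sequential tail evidence against P: for all x > N_min, P(sup_t N_t ≥ x) ≤ (1 − N_min)/(x − N_min). -/
open MeasureTheory

/-- If the net wealth process is a.s. bounded below by `Nmin < 1` at every time, then it
is a `(1 - Nmin, Nmin)`-sequential tail evidence against `P`. -/
theorem net_wealth_sequential_tail_evidence
    {Ω : Type*} {mΩ : MeasurableSpace Ω} {μ : Measure Ω} [IsProbabilityMeasure μ]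
    (ℱ : Filtration ℕ mΩ)
    (X lam β W L N : ℕ → Ω → ℝ)
    (hX_val : ∀ t ω, X (t + 1) ω = 1 ∨ X (t + 1) ω = -1)
    (hX_meas : ∀ t, StronglyMeasurable[ℱ (t + 1)] (X (t + 1)))
    (hX_cond : ∀ t, μ[X (t + 1) | ℱ t] =ᵐ[μ] 0)
    (hlam_pred : ∀ t, StronglyMeasurable[ℱ t] (lam (t + 1)))
    (hlam_bdd : ∀ t ω, lam (t + 1) ω ∈ Set.Icc (-1 : ℝ) 1)
    (hβ_pred : ∀ t, StronglyMeasurable[ℱ t] (β (t + 1)))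
    (hβ_int : ∀ t, Integrable (β (t + 1)) μ)
    (hβ_lb : ∀ t ω, -(W t ω) ≤ β (t + 1) ω)
    (hW0 : ∀ ω, W 0 ω = 1)
    (hW : ∀ t ω, W (t + 1) ω = (W t ω + β (t + 1) ω) * (1 + lam (t + 1) ω * X (t + 1) ω))
    (hL : ∀ t ω, L t ω = ∑ i ∈ Finset.range t, β (i + 1) ω)
    (hN : ∀ t ω, N t ω = W t ω - L t ω)
    (Nmin : ℝ) (hNmin : Nmin < 1)
    (hN_lb : ∀ t, ∀ᵐ ω ∂μ, Nmin ≤ N t ω) :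
    ∀ x : ℝ, Nmin < x →
      μ {ω | (x : EReal) ≤ ⨆ t, (N t ω : EReal)} ≤
        ENNReal.ofReal ((1 - Nmin) / (x - Nmin)) := by
  have hlX : ∀ t ω, ‖lam (t + 1) ω * X (t + 1) ω‖ ≤ 1 := by
    intro t ω
    have h1 := hlam_bdd t ω
    rw [Real.norm_eq_abs, abs_le]
    rcases hX_val t ω with h | h <;> rw [h] <;> constructor <;> linarith [h1.1, h1.2]
  -- adaptedness of `W`
  have hWm : ∀ t, StronglyMeasurable[ℱ t] (W t) := by
    intro t
    induction t with
    | zero =>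
      have : W 0 = fun _ => 1 := funext hW0
      rw [this]; exact stronglyMeasurable_const
    | succ t ih =>
      have : W (t + 1) = (W t + β (t + 1)) * ((fun _ => 1) + lam (t + 1) * X (t + 1)) := by
        ext ω; simp [hW t ω]
      rw [this]
      have hle := ℱ.mono (Nat.le_succ t)
      exact ((ih.mono hle).add ((hβ_pred t).mono hle)).mul
        (stronglyMeasurable_const.add (((hlam_pred t).mono hle).mul (hX_meas t)))
  have hlXm : ∀ t, AEStronglyMeasurable (fun ω => lam (t + 1) ω * X (t + 1) ω) μ := fun t =>
    ((((hlam_pred t).mono (ℱ.le t)).mul ((hX_meas t).mono (ℱ.le (t + 1))))).aestronglyMeasurable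
  have hWi : ∀ t, Integrable (W t) μ := by
    intro t
    induction t with
    | zero =>
      have : W 0 = fun _ => 1 := funext hW0
      rw [this]; exact integrable_const _
    | succ t ih =>
      have h1 : Integrable (fun ω => W t ω + β (t + 1) ω) μ := ih.add (hβ_int t)
      have h2 := h1.mul_bdd (c := 1) (hlXm t) (Filter.Eventually.of_forall (hlX t))
      have : W (t + 1) = fun ω => (W t ω + β (t + 1) ω) +
          (W t ω + β (t + 1) ω) * (lam (t + 1) ω * X (t + 1) ω) := by
        ext ω; rw [hW t ω]; ring
      rw [this]; exact h1.add h2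
  have hLe : ∀ t, L t = ∑ i ∈ Finset.range t, β (i + 1) := by
    intro t; ext ω; simp [hL t ω]
  have hLm : ∀ t, StronglyMeasurable[ℱ t] (L t) := by
    intro t
    rw [hLe t]
    refine Finset.stronglyMeasurable_sum _ fun i hi => ?_
    exact (hβ_pred i).mono (ℱ.mono (Finset.mem_range.1 hi).le)
  have hLi : ∀ t, Integrable (L t) μ := by
    intro t
    rw [hLe t]
    exact integrable_finsetSum' _ fun i _ => hβ_int i
  have hNe : ∀ t, N t = W t - L t := fun t => funext (hN t)
  have hXi : ∀ t, Integrable (X (t + 1)) μ := by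
    intro t
    refine Integrable.of_bound ((hX_meas t).mono (ℱ.le (t + 1))).aestronglyMeasurable 1
      (Filter.Eventually.of_forall fun ω => ?_)
    rcases hX_val t ω with h | h <;> simp [h]
  have hmart : Martingale N ℱ μ := by
    refine martingale_of_condExp_sub_eq_zero_nat (fun t => ?_) (fun t => ?_) fun t => ?_
    · rw [hNe t]; exact (hWm t).sub (hLm t)
    · rw [hNe t]; exact (hWi t).sub (hLi t)
    · have hd : N (t + 1) - N t = ((W t + β (t + 1)) * lam (t + 1)) * X (t + 1) := by
        ext ω
        simp only [Pi.sub_apply, Pi.mul_apply, Pi.add_apply, hN, hL, hW t ω,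
          Finset.sum_range_succ]
        ring
      rw [hd]
      have hi : Integrable (((W t + β (t + 1)) * lam (t + 1)) * X (t + 1)) μ := by
        rw [mul_assoc]
        exact ((hWi t).add (hβ_int t)).mul_bdd (c := 1) (hlXm t)
          (Filter.Eventually.of_forall (hlX t))
      have h1 := condExp_mul_of_stronglyMeasurable_left (m := ℱ t)
        (((hWm t).add (hβ_pred t)).mul (hlam_pred t)) hi (hXi t)
      filter_upwards [h1, hX_cond t] with ω h1 h2
      rw [h1, Pi.mul_apply, h2]; simp
  have hmart2 : Martingale (N - fun _ _ => Nmin) ℱ μ := hmart.sub (martingale_const ℱ μ Nmin)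
  obtain ⟨G, hG, hsub⟩ : ∃ G : ℕ → Ω → ℝ, (∀ t ω, G t ω = max (N t ω - Nmin) 0) ∧
      Submartingale G ℱ μ :=
    ⟨_, fun _ _ => rfl, hmart2.submartingale.pos⟩
  have hN0 : ∀ ω, N 0 ω = 1 := by intro ω; simp [hN, hL, hW0]
  have hint : ∀ n, ∫ ω, G n ω ∂μ = 1 - Nmin := by
    intro n
    have h1 : ∫ ω, G n ω ∂μ = ∫ ω, (N n ω - Nmin) ∂μ := by
      refine integral_congr_ae ?_
      filter_upwards [hN_lb n] with ω h
      simp [hG, h]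
    have h2 := hmart2.setIntegral_eq (Nat.zero_le n) MeasurableSet.univ
    simp only [Measure.restrict_univ, Pi.sub_apply] at h2
    rw [h1, ← h2]
    simp [hN0]
  -- Doob's maximal inequality, at levels `y`
  have key : ∀ y : ℝ, Nmin < y →
      μ (⋃ n, {ω | y - Nmin ≤ (Finset.range (n + 1)).sup' Finset.nonempty_range_add_one
        fun k => G k ω}) ≤ ENNReal.ofReal ((1 - Nmin) / (y - Nmin)) := by
    intro y hy
    have hy' : 0 < y - Nmin := sub_pos.2 hy
    rw [Monotone.measure_iUnion]
    · refine iSup_le fun n => ?_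
      have h := maximal_ineq hsub (fun k ω => by simp [hG]) (ε := ⟨y - Nmin, hy'.le⟩) n
      rw [ENNReal.ofReal_div_of_pos hy', ENNReal.le_div_iff_mul_le (by simp [hy]) (by simp),
        mul_comm]
      have he : ENNReal.ofReal (y - Nmin) = ENNReal.ofNNReal ⟨y - Nmin, hy'.le⟩ :=
        ENNReal.ofReal_eq_coe_nnreal hy'.le
      rw [he]
      refine h.trans (ENNReal.ofReal_le_ofReal ?_)
      rw [← hint n]
      exact setIntegral_le_integral (hsub.integrable n)
        (Filter.Eventually.of_forall fun ω => by simp [hG])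
    · intro n m hnm ω hω
      refine le_trans hω.out (Finset.sup'_mono _ ?_ _)
      exact Finset.range_mono (by omega)
  intro x hx
  have hlt : ∀ y ∈ Set.Ioo Nmin x, μ {ω | (x : EReal) ≤ ⨆ t, (N t ω : EReal)} ≤
      ENNReal.ofReal ((1 - Nmin) / (y - Nmin)) := by
    rintro y ⟨hy1, hy2⟩
    refine (measure_mono ?_).trans (key y hy1)
    intro ω hω
    have h1 : (y : EReal) < ⨆ t, (N t ω : EReal) :=
      lt_of_lt_of_le (EReal.coe_lt_coe_iff.2 hy2) hω
    obtain ⟨t, ht⟩ := lt_iSup_iff.1 h1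
    rw [EReal.coe_lt_coe_iff] at ht
    refine Set.mem_iUnion.2 ⟨t, ?_⟩
    rw [Set.mem_setOf_eq, Finset.le_sup'_iff]
    refine ⟨t, Finset.self_mem_range_succ t, ?_⟩
    have : N t ω - Nmin ≤ G t ω := by simp [hG]
    linarith
  have hcont : Filter.Tendsto (fun y : ℝ => ENNReal.ofReal ((1 - Nmin) / (y - Nmin)))
      (nhdsWithin x (Set.Iio x)) (nhds (ENNReal.ofReal ((1 - Nmin) / (x - Nmin)))) := by
    refine ENNReal.tendsto_ofReal (Filter.Tendsto.mono_left ?_ nhdsWithin_le_nhds)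
    exact tendsto_const_nhds.div (Filter.tendsto_id.sub tendsto_const_nhds) (sub_pos.2 hx).ne'
  refine ge_of_tendsto hcont ?_
  filter_upwards [Ioo_mem_nhdsLT hx] with y hy using hlt y hy
end

section
/- Suppose β_t ≥ 0 pointwise for all t, and let {η_t}_{t≥1} be a predictable process with η_t ≥ 1 for all t. Then the sub-net wealth process Ñ_t = W_t − Σ_{i=1}^t η_i β_i is a supermartingale with respect to {ℱ_t} under P. -/
open MeasureTheory

/-- With nonnegative borrowings and a predictable weight process `η ≥ 1`, the sub-net
wealth process `Ñ_t = W_t - Σ_{i≤t} η_i β_i` is a supermartingale. -/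
theorem sub_net_wealth_supermartingale
    {Ω : Type*} {mΩ : MeasurableSpace Ω} {μ : Measure Ω} [IsProbabilityMeasure μ]
    (ℱ : Filtration ℕ mΩ)
    (X lam β η W Ntilde : ℕ → Ω → ℝ)
    (hX_val : ∀ t ω, X (t + 1) ω = 1 ∨ X (t + 1) ω = -1)
    (hX_meas : ∀ t, StronglyMeasurable[ℱ (t + 1)] (X (t + 1)))
    (hX_cond : ∀ t, μ[X (t + 1) | ℱ t] =ᵐ[μ] 0)
    (hlam_pred : ∀ t, StronglyMeasurable[ℱ t] (lam (t + 1)))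
    (hlam_bdd : ∀ t ω, lam (t + 1) ω ∈ Set.Icc (-1 : ℝ) 1)
    (hβ_pred : ∀ t, StronglyMeasurable[ℱ t] (β (t + 1)))
    (hβ_nonneg : ∀ t ω, 0 ≤ β (t + 1) ω)
    (hη_pred : ∀ t, StronglyMeasurable[ℱ t] (η (t + 1)))
    (hη_ge_one : ∀ t ω, 1 ≤ η (t + 1) ω)
    (hηβ_int : ∀ t, Integrable (fun ω => η (t + 1) ω * β (t + 1) ω) μ)
    (hW0 : ∀ ω, W 0 ω = 1)
    (hW : ∀ t ω, W (t + 1) ω = (W t ω + β (t + 1) ω) * (1 + lam (t + 1) ω * X (t + 1) ω))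
    (hNtilde : ∀ t ω, Ntilde t ω = W t ω - ∑ i ∈ Finset.range t, η (i + 1) ω * β (i + 1) ω) :
    Supermartingale Ntilde ℱ μ := by
  have hXb : ∀ t ω, ‖X (t + 1) ω‖ ≤ 1 := by
    intro t ω
    rcases hX_val t ω with h | h <;> simp [h]
  have hlb : ∀ t ω, ‖lam (t + 1) ω‖ ≤ 1 := by
    intro t ω
    rw [Real.norm_eq_abs, abs_le]
    exact hlam_bdd t ω
  have hXsm : ∀ t, AEStronglyMeasurable (X (t + 1)) μ := fun t =>
    ((hX_meas t).mono (ℱ.le _)).aestronglyMeasurable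
  have hXint : ∀ t, Integrable (X (t + 1)) μ := fun t =>
    Integrable.of_bound (hXsm t) 1 (Filter.Eventually.of_forall (hXb t))
  have hβint : ∀ t, Integrable (β (t + 1)) μ := by
    intro t
    refine (hηβ_int t).mono ((hβ_pred t).mono (ℱ.le _)).aestronglyMeasurable
      (Filter.Eventually.of_forall fun ω => ?_)
    have h1 := hβ_nonneg t ω
    have h2 := hη_ge_one t ω
    rw [Real.norm_of_nonneg h1, Real.norm_of_nonneg (by positivity)]
    nlinarith
  have hWf : ∀ t, W (t + 1) = (W t + β (t + 1)) + ((W t + β (t + 1)) * lam (t + 1)) * X (t + 1) := by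
    intro t
    ext ω
    simp only [Pi.add_apply, Pi.mul_apply, hW t ω]
    ring
  have hWsm : ∀ t, StronglyMeasurable[ℱ t] (W t) := by
    intro t
    induction t with
    | zero =>
      have : W 0 = fun _ => (1 : ℝ) := funext hW0
      rw [this]
      exact stronglyMeasurable_const
    | succ t ih =>
      rw [hWf t]
      have hm := ℱ.mono (Nat.le_succ t)
      have h1 := (ih.add (hβ_pred t)).mono hm
      exact h1.add ((h1.mul ((hlam_pred t).mono hm)).mul (hX_meas t))
  have hstep : ∀ t, Integrable (W t) μ →
      Integrable (((W t + β (t + 1)) * lam (t + 1)) * X (t + 1)) μ := by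
    intro t h
    exact ((h.add (hβint t)).mul_bdd ((hlam_pred t).mono (ℱ.le _)).aestronglyMeasurable
      (Filter.Eventually.of_forall (hlb t))).mul_bdd (hXsm t)
      (Filter.Eventually.of_forall (hXb t))
  have hWint : ∀ t, Integrable (W t) μ := by
    intro t
    induction t with
    | zero =>
      have : W 0 = fun _ => (1 : ℝ) := funext hW0
      rw [this]
      exact integrable_const _
    | succ t ih =>
      rw [hWf t]
      exact (ih.add (hβint t)).add (hstep t ih)
  have hNf : ∀ t, Ntilde t = fun ω => W t ω - ∑ i ∈ Finset.range t, η (i + 1) ω * β (i + 1) ω :=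
    fun t => funext (hNtilde t)
  have hNsm : ∀ t, StronglyMeasurable[ℱ t] (Ntilde t) := by
    intro t
    rw [hNf t]
    refine (hWsm t).sub (Finset.stronglyMeasurable_fun_sum _ fun i hi => ?_)
    have hm := ℱ.mono (Finset.mem_range.1 hi).le
    exact ((hη_pred i).mono hm).mul ((hβ_pred i).mono hm)
  have hNint : ∀ t, Integrable (Ntilde t) μ := by
    intro t
    rw [hNf t]
    exact (hWint t).sub (integrable_finsetSum _ fun i _ => hηβ_int i)
  refine supermartingale_nat hNsm hNint fun t => ?_
  have hdec : Ntilde (t + 1) = (Ntilde t + (β (t + 1) - η (t + 1) * β (t + 1)))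
      + ((W t + β (t + 1)) * lam (t + 1)) * X (t + 1) := by
    ext ω
    simp only [Pi.add_apply, Pi.mul_apply, Pi.sub_apply, hNtilde, hW t ω, Finset.sum_range_succ]
    ring
  have hAint : Integrable (Ntilde t + (β (t + 1) - η (t + 1) * β (t + 1))) μ :=
    (hNint t).add ((hβint t).sub (hηβ_int t))
  have hAsm : StronglyMeasurable[ℱ t] (Ntilde t + (β (t + 1) - η (t + 1) * β (t + 1))) :=
    (hNsm t).add ((hβ_pred t).sub ((hη_pred t).mul (hβ_pred t)))
  have hGsm : StronglyMeasurable[ℱ t] ((W t + β (t + 1)) * lam (t + 1)) :=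
    ((hWsm t).add (hβ_pred t)).mul (hlam_pred t)
  have hpull := condExp_mul_of_stronglyMeasurable_left hGsm (hstep t (hWint t)) (hXint t)
  have hadd := condExp_add hAint (hstep t (hWint t)) (ℱ t)
  rw [condExp_of_stronglyMeasurable (ℱ.le t) hAsm hAint] at hadd
  rw [hdec]
  filter_upwards [hadd, hpull, hX_cond t] with ω h1 h2 h3
  rw [h1, Pi.add_apply, h2, Pi.mul_apply, h3]
  have h4 := hβ_nonneg t ω
  have h5 := hη_ge_one t ω
  simp only [Pi.add_apply, Pi.sub_apply, Pi.mul_apply, Pi.zero_apply]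
  nlinarith
end

section
/- Suppose β_t ≥ 0 pointwise for all t, {η_t}_{t≥1} is a predictable process with η_t ≥ 1 for all t, and there is a non-random number G < 1 such that Ñ_t ≥ G almost surely for all t. Then the sub-net wealth process {Ñ_t} is a (1 − G, G)-sequential tail evidence against P: for all x > G, P(sup_t Ñ_t ≥ x) ≤ (1 − G)/(x − G). -/
open MeasureTheory

/-- Finite-horizon maximal inequality for supermartingales bounded below. -/
lemma ville_fin {Ω : Type*} {mΩ : MeasurableSpace Ω} {μ : Measure Ω} [IsProbabilityMeasure μ]
    (ℱ : Filtration ℕ mΩ) (N : ℕ → Ω → ℝ) (hN : Supermartingale N ℱ μ) (G : ℝ)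
    (hlb : ∀ t, ∀ᵐ ω ∂μ, G ≤ N t ω) (h0 : ∀ ω, N 0 ω = 1) (y : ℝ) (hy : G < y) (n : ℕ) :
    μ {ω | ∃ k ≤ n, y ≤ N k ω} ≤ ENNReal.ofReal ((1 - G) / (y - G)) := by
  have hst : IsStoppingTime ℱ (fun ω => ((hittingBtwn N (Set.Ici y) 0 n ω : ℕ) : ℕ∞)) :=
    hN.stronglyAdapted.adapted.isStoppingTime_hittingBtwn measurableSet_Ici
  have hbd : ∀ ω, ((hittingBtwn N (Set.Ici y) 0 n ω : ℕ) : ℕ∞) ≤ (n : ℕ) :=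
    fun ω => mod_cast hittingBtwn_le ω
  have hint := integrable_stoppedValue ℕ hst hN.integrable hbd
  have hE := hN.neg.expected_stoppedValue_mono (isStoppingTime_const ℱ 0) hst
    (fun ω => (Nat.cast_le (α := ℕ∞)).2 (Nat.zero_le _)) hbd
  have hE1 : ∫ ω, N (hittingBtwn N (Set.Ici y) 0 n ω) ω ∂μ ≤ 1 := by
    have e1 : (∫ ω, stoppedValue (-N) (fun _ => ((0 : ℕ) : ℕ∞)) ω ∂μ) = -1 := by
      have : ∀ ω, stoppedValue (-N) (fun _ => ((0 : ℕ) : ℕ∞)) ω = -1 := by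
        intro ω
        change (-N) 0 ω = -1
        simp [h0]
      rw [integral_congr_ae (Filter.Eventually.of_forall this)]
      simp
    have e2 : (∫ ω, stoppedValue (-N) (fun ω => ((hittingBtwn N (Set.Ici y) 0 n ω : ℕ) : ℕ∞)) ω ∂μ)
        = - ∫ ω, N (hittingBtwn N (Set.Ici y) 0 n ω) ω ∂μ := by
      rw [← integral_neg]
      rfl
    have hE' : (∫ ω, stoppedValue (-N) (fun _ => ((0 : ℕ) : ℕ∞)) ω ∂μ) ≤
      (∫ ω, stoppedValue (-N) (fun ω => ((hittingBtwn N (Set.Ici y) 0 n ω : ℕ) : ℕ∞)) ω ∂μ) := hE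
    rw [e1, e2] at hE'
    linarith
  have hint' : Integrable (fun ω => N (hittingBtwn N (Set.Ici y) 0 n ω) ω) μ := hint
  have hnn : 0 ≤ᵐ[μ] fun ω => N (hittingBtwn N (Set.Ici y) 0 n ω) ω - G := by
    filter_upwards [ae_all_iff.2 hlb] with ω hω
    simpa using hω _
  have hM := mul_meas_ge_le_integral_of_nonneg hnn (hint'.sub (integrable_const G)) (y - G)
  have hI : ∫ ω, (N (hittingBtwn N (Set.Ici y) 0 n ω) ω - G) ∂μ ≤ 1 - G := by
    rw [integral_sub hint' (integrable_const G)]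
    simpa using hE1
  have hsub : {ω | ∃ k ≤ n, y ≤ N k ω} ⊆
      {ω | y - G ≤ N (hittingBtwn N (Set.Ici y) 0 n ω) ω - G} := by
    rintro ω ⟨k, hk, hyk⟩
    have : N (hittingBtwn N (Set.Ici y) 0 n ω) ω ∈ Set.Ici y :=
      hittingBtwn_mem_set ⟨k, ⟨Nat.zero_le _, hk⟩, hyk⟩
    have h2 : y ≤ N (hittingBtwn N (Set.Ici y) 0 n ω) ω := this
    change y - G ≤ _
    linarith
  refine (measure_mono hsub).trans ?_
  rw [← ofReal_measureReal]
  apply ENNReal.ofReal_le_ofReal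
  rw [le_div_iff₀ (by linarith), mul_comm]
  exact hM.trans hI

/-- If the sub-net wealth process is a.s. bounded below by `G < 1` at every time, then it
is a `(1 - G, G)`-sequential tail evidence against `P`. -/
theorem sub_net_wealth_sequential_tail_evidence
    {Ω : Type*} {mΩ : MeasurableSpace Ω} {μ : Measure Ω} [IsProbabilityMeasure μ]
    (ℱ : Filtration ℕ mΩ)
    (X lam β η W Ntilde : ℕ → Ω → ℝ)
    (hX_val : ∀ t ω, X (t + 1) ω = 1 ∨ X (t + 1) ω = -1)
    (hX_meas : ∀ t, StronglyMeasurable[ℱ (t + 1)] (X (t + 1)))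
    (hX_cond : ∀ t, μ[X (t + 1) | ℱ t] =ᵐ[μ] 0)
    (hlam_pred : ∀ t, StronglyMeasurable[ℱ t] (lam (t + 1)))
    (hlam_bdd : ∀ t ω, lam (t + 1) ω ∈ Set.Icc (-1 : ℝ) 1)
    (hβ_pred : ∀ t, StronglyMeasurable[ℱ t] (β (t + 1)))
    (hβ_nonneg : ∀ t ω, 0 ≤ β (t + 1) ω)
    (hη_pred : ∀ t, StronglyMeasurable[ℱ t] (η (t + 1)))
    (hη_ge_one : ∀ t ω, 1 ≤ η (t + 1) ω)
    (hηβ_int : ∀ t, Integrable (fun ω => η (t + 1) ω * β (t + 1) ω) μ)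
    (hW0 : ∀ ω, W 0 ω = 1)
    (hW : ∀ t ω, W (t + 1) ω = (W t ω + β (t + 1) ω) * (1 + lam (t + 1) ω * X (t + 1) ω))
    (hNtilde : ∀ t ω, Ntilde t ω = W t ω - ∑ i ∈ Finset.range t, η (i + 1) ω * β (i + 1) ω)
    (G : ℝ) (hG : G < 1)
    (hNtilde_lb : ∀ t, ∀ᵐ ω ∂μ, G ≤ Ntilde t ω) :
    ∀ x : ℝ, G < x →
      μ {ω | (x : EReal) ≤ ⨆ t, (Ntilde t ω : EReal)} ≤
        ENNReal.ofReal ((1 - G) / (x - G)) := by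
  have hW_nn : ∀ t ω, 0 ≤ W t ω := by
    intro t ω
    induction t with
    | zero => rw [hW0]; norm_num
    | succ t ih =>
      rw [hW]
      refine mul_nonneg (add_nonneg ih (hβ_nonneg t ω)) ?_
      obtain ⟨h1, h2⟩ := hlam_bdd t ω
      rcases hX_val t ω with h | h <;> rw [h] <;> linarith
  have hW_meas : ∀ t, StronglyMeasurable[ℱ t] (W t) := by
    intro t
    induction t with
    | zero =>
      have : W 0 = fun _ => 1 := funext hW0
      rw [this]; exact stronglyMeasurable_const
    | succ t ih =>
      have hle : ℱ t ≤ ℱ (t + 1) := ℱ.mono (Nat.le_succ t)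
      have : W (t + 1) = fun ω => (W t ω + β (t + 1) ω) * (1 + lam (t + 1) ω * X (t + 1) ω) :=
        funext (hW t)
      rw [this]
      exact ((ih.mono hle).add ((hβ_pred t).mono hle)).mul
        (stronglyMeasurable_const.add (((hlam_pred t).mono hle).mul (hX_meas t)))
  have hβ_int : ∀ t, Integrable (β (t + 1)) μ := by
    intro t
    refine (hηβ_int t).mono' ((hβ_pred t).mono (ℱ.le t)).aestronglyMeasurable ?_
    refine Filter.Eventually.of_forall fun ω => ?_
    rw [Real.norm_of_nonneg (hβ_nonneg t ω)]
    nlinarith [hβ_nonneg t ω, hη_ge_one t ω]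
  have hX_int : ∀ t, Integrable (X (t + 1)) μ := by
    intro t
    refine Integrable.of_bound ((hX_meas t).mono (ℱ.le _)).aestronglyMeasurable 1 ?_
    refine Filter.Eventually.of_forall fun ω => ?_
    rcases hX_val t ω with h | h <;> simp [h]
  have hgX : ∀ t, Integrable (W t) μ →
      Integrable ((fun ω => (W t ω + β (t + 1) ω) * lam (t + 1) ω) * X (t + 1)) μ := by
    intro t ih
    refine (ih.add (hβ_int t)).mono'
      (((((hW_meas t).add (hβ_pred t)).mul (hlam_pred t)).mono (ℱ.le t)).mul
        ((hX_meas t).mono (ℱ.le _))).aestronglyMeasurable ?_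
    refine Filter.Eventually.of_forall fun ω => ?_
    have h0 : 0 ≤ W t ω + β (t + 1) ω := add_nonneg (hW_nn t ω) (hβ_nonneg t ω)
    have h1 : |lam (t + 1) ω| ≤ 1 := abs_le.2 (hlam_bdd t ω)
    have h2 : |X (t + 1) ω| = 1 := by rcases hX_val t ω with h | h <;> simp [h]
    simp only [Pi.mul_apply, Pi.add_apply, Real.norm_eq_abs, abs_mul, h2, abs_of_nonneg h0, mul_one]
    exact mul_le_of_le_one_right h0 h1
  have hW_int : ∀ t, Integrable (W t) μ := by
    intro t
    induction t with
    | zero =>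
      have : W 0 = fun _ => 1 := funext hW0
      rw [this]; exact integrable_const _
    | succ t ih =>
      have : W (t + 1) = W t + β (t + 1) +
          (fun ω => (W t ω + β (t + 1) ω) * lam (t + 1) ω) * X (t + 1) := by
        funext ω
        simp only [Pi.add_apply, Pi.mul_apply, hW]
        ring
      rw [this]
      exact (ih.add (hβ_int t)).add (hgX t ih)
  have hN_meas : ∀ t, StronglyMeasurable[ℱ t] (Ntilde t) := by
    intro t
    have : Ntilde t = fun ω => W t ω - ∑ i ∈ Finset.range t, η (i + 1) ω * β (i + 1) ω :=
      funext (hNtilde t)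
    rw [this]
    refine (hW_meas t).sub (Finset.stronglyMeasurable_fun_sum _ fun i hi => ?_)
    have hle : ℱ i ≤ ℱ t := ℱ.mono (Finset.mem_range.1 hi).le
    exact ((hη_pred i).mono hle).mul ((hβ_pred i).mono hle)
  have hN_int : ∀ t, Integrable (Ntilde t) μ := by
    intro t
    have : Ntilde t = fun ω => W t ω - ∑ i ∈ Finset.range t, η (i + 1) ω * β (i + 1) ω :=
      funext (hNtilde t)
    rw [this]
    exact (hW_int t).sub (integrable_finsetSum _ fun i _ => hηβ_int i)
  have hSup : Supermartingale Ntilde ℱ μ := by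
    refine supermartingale_nat hN_meas hN_int fun t => ?_
    set g : Ω → ℝ := fun ω => (W t ω + β (t + 1) ω) * lam (t + 1) ω with hg
    set D : Ω → ℝ := fun ω => Ntilde t ω - (η (t + 1) ω * β (t + 1) ω - β (t + 1) ω) with hD
    have hdec : Ntilde (t + 1) = D + g * X (t + 1) := by
      funext ω
      simp only [hD, hg, Pi.add_apply, Pi.mul_apply, hNtilde, hW, Finset.sum_range_succ]
      ring
    have hD_int : Integrable D μ := (hN_int t).sub ((hηβ_int t).sub (hβ_int t))
    have hD_meas : StronglyMeasurable[ℱ t] D :=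
      (hN_meas t).sub (((hη_pred t).mul (hβ_pred t)).sub (hβ_pred t))
    have hg_meas : StronglyMeasurable[ℱ t] g := ((hW_meas t).add (hβ_pred t)).mul (hlam_pred t)
    have hg_int := hgX t (hW_int t)
    rw [hdec]
    have c1 := condExp_add hD_int hg_int (ℱ t)
    have c2 := condExp_mul_of_stronglyMeasurable_left hg_meas hg_int (hX_int t)
    have c3 := condExp_of_stronglyMeasurable (ℱ.le t) hD_meas hD_int
    filter_upwards [c1, c2, hX_cond t] with ω h1 h2 h3
    rw [h1, Pi.add_apply, h2, Pi.mul_apply, h3, c3]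
    simp only [hD, Pi.zero_apply, mul_zero, add_zero]
    nlinarith [hβ_nonneg t ω, hη_ge_one t ω]
  have hN0 : ∀ ω, Ntilde 0 ω = 1 := by
    intro ω
    simp [hNtilde, hW0]
  intro x hx
  have key : ∀ y, G < y → y < x → μ {ω | (x : EReal) ≤ ⨆ t, (Ntilde t ω : EReal)} ≤
        ENNReal.ofReal ((1 - G) / (y - G)) := by
    intro y hy hyx
    have hsub : {ω | (x : EReal) ≤ ⨆ t, (Ntilde t ω : EReal)} ⊆
        ⋃ n, {ω | ∃ k ≤ n, y ≤ Ntilde k ω} := by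
      intro ω hω
      have hω' : (x : EReal) ≤ ⨆ t, (Ntilde t ω : EReal) := hω
      have h1 : (y : EReal) < ⨆ t, (Ntilde t ω : EReal) :=
        lt_of_lt_of_le (EReal.coe_lt_coe_iff.2 hyx) hω'
      obtain ⟨k, hk⟩ := lt_iSup_iff.1 h1
      exact Set.mem_iUnion.2 ⟨k, k, le_rfl, (EReal.coe_lt_coe_iff.1 hk).le⟩
    refine (measure_mono hsub).trans ?_
    have hmono : Monotone fun n : ℕ => {ω | ∃ k ≤ n, y ≤ Ntilde k ω} := by
      rintro a b hab ω ⟨k, hk, h⟩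
      exact ⟨k, hk.trans hab, h⟩
    rw [hmono.measure_iUnion]
    exact iSup_le fun n => ville_fin ℱ Ntilde hSup G hNtilde_lb hN0 y hy n
  have hlim : Filter.Tendsto (fun y : ℝ => ENNReal.ofReal ((1 - G) / (y - G)))
      (nhdsWithin x (Set.Iio x)) (nhds (ENNReal.ofReal ((1 - G) / (x - G)))) := by
    refine ENNReal.tendsto_ofReal (Filter.Tendsto.mono_left ?_ nhdsWithin_le_nhds)
    refine tendsto_const_nhds.div (Filter.tendsto_id.sub tendsto_const_nhds) ?_
    exact (sub_pos.2 hx).ne'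
  refine ge_of_tendsto hlim ?_
  filter_upwards [Ioo_mem_nhdsLT hx] with y hy
  exact key y hy.1 hy.2
end

section
/- The functional 𝓔 is leverage invariant: for every Q-integrable random variable Y and every real β ≠ −1, the set {a·E_Q[Y] + b : a, b ∈ ℝ such that P(aY + b ≥ x) ≤ 1/x for all x > 0} coincides with the corresponding set for the leveraged outcome (1 + β)Y − β, namely {a·E_Q[(1+β)Y − β] + b : a, b ∈ ℝ such that P(a((1+β)Y − β) + b ≥ x) ≤ 1/x for all x > 0}; consequently 𝓔((1 + β)Y − β) = 𝓔(Y). -/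
open MeasureTheory

/-- **Leverage invariance of the evidence functional 𝓔.** The set of values `a·E_Q[Y] + b`
over affine standardizations `(a, b)` of `Y` into a tail evidence against `P` coincides
with the corresponding set for the leveraged outcome `(1 + β)Y - β` (β ≠ -1); consequently
the suprema `𝓔((1 + β)Y - β)` and `𝓔(Y)` agree. -/
theorem evidence_functional_leverage_invariant
    {Ω : Type*} {mΩ : MeasurableSpace Ω} (P Q : Measure Ω)
    [IsProbabilityMeasure P] [IsProbabilityMeasure Q]
    (Y : Ω → ℝ) (hY : Integrable Y Q) (β : ℝ) (hβ : β ≠ -1) :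
    ({r : ℝ | ∃ a b : ℝ, r = a * (∫ ω, ((1 + β) * Y ω - β) ∂Q) + b ∧
        ∀ x : ℝ, 0 < x →
          P {ω | x ≤ a * ((1 + β) * Y ω - β) + b} ≤ ENNReal.ofReal (1 / x)}
      = {r : ℝ | ∃ a b : ℝ, r = a * (∫ ω, Y ω ∂Q) + b ∧
          ∀ x : ℝ, 0 < x → P {ω | x ≤ a * Y ω + b} ≤ ENNReal.ofReal (1 / x)}) ∧
    sSup {r : ℝ | ∃ a b : ℝ, r = a * (∫ ω, ((1 + β) * Y ω - β) ∂Q) + b ∧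
        ∀ x : ℝ, 0 < x →
          P {ω | x ≤ a * ((1 + β) * Y ω - β) + b} ≤ ENNReal.ofReal (1 / x)}
      = sSup {r : ℝ | ∃ a b : ℝ, r = a * (∫ ω, Y ω ∂Q) + b ∧
          ∀ x : ℝ, 0 < x → P {ω | x ≤ a * Y ω + b} ≤ ENNReal.ofReal (1 / x)} := by
  have hint : ∫ ω, ((1 + β) * Y ω - β) ∂Q = (1 + β) * (∫ ω, Y ω ∂Q) - β := by
    rw [integral_sub (hY.const_mul _) (integrable_const _), integral_const_mul]
    simp
  have hc : 1 + β ≠ 0 := fun h => hβ (by linarith)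
  rw [hint]
  refine (fun h => ⟨h, congrArg sSup h⟩) ?_
  ext r
  constructor
  · rintro ⟨a, b, hr, h⟩
    refine ⟨a * (1 + β), b - a * β, by rw [hr]; ring, fun x hx => ?_⟩
    have e : ∀ ω, a * (1 + β) * Y ω + (b - a * β) = a * ((1 + β) * Y ω - β) + b :=
      fun ω => by ring
    simp only [e]
    exact h x hx
  · rintro ⟨a, b, hr, h⟩
    have key : ∀ y : ℝ, a / (1 + β) * ((1 + β) * y - β) + (b + a / (1 + β) * β) = a * y + b :=
      fun y => by field_simp; ring
    refine ⟨a / (1 + β), b + a / (1 + β) * β, by rw [hr, key], fun x hx => ?_⟩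
    simp only [key]
    exact h x hx
end

section
/- In the mispriced (bargained) betting game with deterministic bonus rates b_t ≥ 0, where the wealth evolves as W_0 = 1, W_t = (W_{t−1} + β_t)(1 + b_t)(1 + λ_t X_t), suppose B := sup_t E[Σ_{i=1}^t (1 + b_i)β_i^+] < ∞ and C := Σ_{t=1}^∞ b_t < ∞. Then the wealth process {W_t} is a (1 + B, 0, C)-sequential tail evidence against P: for all x > 0, P(sup_t W_t ≥ x) ≤ (1 + B)/x + C. -/
open MeasureTheory

/-- The wealth process stopped when it first reaches level `y`. -/
noncomputable def stoppedW {Ω : Type*} (W : ℕ → Ω → ℝ) (y : ℝ) : ℕ → Ω → ℝ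
  | 0 => W 0
  | t + 1 => fun ω => if y ≤ stoppedW W y t ω then stoppedW W y t ω else W (t + 1) ω

lemma stoppedW_succ {Ω : Type*} (W : ℕ → Ω → ℝ) (y : ℝ) (t : ℕ) (ω : Ω) :
    stoppedW W y (t + 1) ω
      = if y ≤ stoppedW W y t ω then stoppedW W y t ω else W (t + 1) ω := rfl

lemma stoppedW_eq {Ω : Type*} (W : ℕ → Ω → ℝ) (y : ℝ) (t : ℕ) (ω : Ω)
    (h : ¬ y ≤ stoppedW W y t ω) : stoppedW W y t ω = W t ω := by
  cases t with
  | zero => rfl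
  | succ t =>
    rw [stoppedW_succ] at h ⊢
    by_cases h1 : y ≤ stoppedW W y t ω
    · rw [if_pos h1] at h
      exact absurd h1 h
    · rw [if_neg h1]

lemma stoppedW_mono {Ω : Type*} (W : ℕ → Ω → ℝ) (y : ℝ) (s t : ℕ) (hst : s ≤ t) (ω : Ω)
    (h : y ≤ stoppedW W y s ω) : y ≤ stoppedW W y t ω := by
  induction t, hst using Nat.le_induction with
  | base => exact h
  | succ n hn ih => rw [stoppedW_succ, if_pos ih]; exact ih

lemma stoppedW_ge {Ω : Type*} (W : ℕ → Ω → ℝ) (y : ℝ) (t : ℕ) (ω : Ω)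
    (h : y ≤ W t ω) : y ≤ stoppedW W y t ω := by
  by_contra hc
  rw [stoppedW_eq W y t ω hc] at hc
  exact hc h

lemma integral_mul_eq_zero_aux {Ω : Type*} {m mΩ : MeasurableSpace Ω} {μ : Measure Ω}
    [IsProbabilityMeasure μ] (hm : m ≤ mΩ) (G Y : Ω → ℝ) (hG : StronglyMeasurable[m] G)
    (hGY : Integrable (fun ω => G ω * Y ω) μ) (hY : Integrable Y μ)
    (h0 : μ[Y | m] =ᵐ[μ] 0) : ∫ ω, G ω * Y ω ∂μ = 0 := by
  have h1 : μ[G * Y | m] =ᵐ[μ] G * μ[Y | m] :=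
    condExp_mul_of_stronglyMeasurable_left hG hGY hY
  rw [← integral_condExp hm]
  apply integral_eq_zero_of_ae
  refine Filter.EventuallyEq.trans (show _ =ᵐ[μ] _ from h1) ?_
  filter_upwards [h0] with ω h
  simp [h]

/-- In the mispriced (bargained) betting game with deterministic bonus rates `b_t ≥ 0`,
if `B = sup_t E[Σ_{i=1}^t (1 + b_i) β_i⁺] < ∞` and `C = Σ_t b_t < ∞`, then the wealth
process is a `(1 + B, 0, C)`-sequential tail evidence against `P`. -/
theorem mispriced_wealth_sequential_tail_evidence
    {Ω : Type*} {mΩ : MeasurableSpace Ω} {μ : Measure Ω} [IsProbabilityMeasure μ]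
    (ℱ : Filtration ℕ mΩ)
    (X lam β W : ℕ → Ω → ℝ) (b : ℕ → ℝ)
    (hX_val : ∀ t ω, X (t + 1) ω = 1 ∨ X (t + 1) ω = -1)
    (hX_meas : ∀ t, StronglyMeasurable[ℱ (t + 1)] (X (t + 1)))
    (hX_cond : ∀ t, μ[X (t + 1) | ℱ t] =ᵐ[μ] 0)
    (hlam_pred : ∀ t, StronglyMeasurable[ℱ t] (lam (t + 1)))
    (hlam_bdd : ∀ t ω, lam (t + 1) ω ∈ Set.Icc (-1 : ℝ) 1)
    (hβ_pred : ∀ t, StronglyMeasurable[ℱ t] (β (t + 1)))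
    (hβ_int : ∀ t, Integrable (β (t + 1)) μ)
    (hβ_lb : ∀ t ω, -(W t ω) ≤ β (t + 1) ω)
    (hb_nonneg : ∀ t, 0 ≤ b (t + 1))
    (hW0 : ∀ ω, W 0 ω = 1)
    (hW : ∀ t ω, W (t + 1) ω
      = (W t ω + β (t + 1) ω) * (1 + b (t + 1)) * (1 + lam (t + 1) ω * X (t + 1) ω))
    (hbdd : BddAbove (Set.range fun t =>
      ∫ ω, ∑ i ∈ Finset.range t, (1 + b (i + 1)) * max (β (i + 1) ω) 0 ∂μ))
    (B : ℝ) (hB : B = ⨆ t, ∫ ω, ∑ i ∈ Finset.range t, (1 + b (i + 1)) * max (β (i + 1) ω) 0 ∂μ)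
    (hsummable : Summable fun t => b (t + 1))
    (C : ℝ) (hC : C = ∑' t, b (t + 1)) :
    ∀ x : ℝ, 0 < x →
      μ {ω | (x : EReal) ≤ ⨆ t, (W t ω : EReal)} ≤ ENNReal.ofReal ((1 + B) / x + C) := by
  have hWnn : ∀ t ω, 0 ≤ W t ω := by
    intro t ω
    cases t with
    | zero => rw [hW0]; norm_num
    | succ t =>
      rw [hW]
      have h1 := hβ_lb t ω
      have h2 := hb_nonneg t
      obtain ⟨h3, h4⟩ := hlam_bdd t ω
      refine mul_nonneg (mul_nonneg (by linarith) (by linarith)) ?_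
      rcases hX_val t ω with h | h <;> rw [h] <;> linarith
  have hWm : ∀ t, StronglyMeasurable[ℱ t] (W t) := by
    intro t
    induction t with
    | zero =>
      have : W 0 = fun _ => (1 : ℝ) := funext hW0
      rw [this]; exact stronglyMeasurable_const
    | succ t ih =>
      have : W (t + 1) = fun ω => (W t ω + β (t + 1) ω) * (1 + b (t + 1))
          * (1 + lam (t + 1) ω * X (t + 1) ω) := funext (hW t)
      rw [this]
      have hle := ℱ.mono (Nat.le_succ t)
      exact (((ih.mono hle).add ((hβ_pred t).mono hle)).mul stronglyMeasurable_const).mul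
        (stronglyMeasurable_const.add (((hlam_pred t).mono hle).mul (hX_meas t)))
  have hXabs : ∀ t ω, |X (t + 1) ω| = 1 := by
    intro t ω
    rcases hX_val t ω with h | h <;> rw [h] <;> simp
  have hlabs : ∀ t ω, |lam (t + 1) ω| ≤ 1 := fun t ω => abs_le.2 (hlam_bdd t ω)
  have hXm' : ∀ t, AEStronglyMeasurable (X (t + 1)) μ := fun t =>
    ((hX_meas t).mono (ℱ.le _)).aestronglyMeasurable
  have hlm' : ∀ t, AEStronglyMeasurable (lam (t + 1)) μ := fun t =>
    ((hlam_pred t).mono (ℱ.le _)).aestronglyMeasurable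
  have hXint : ∀ t, Integrable (X (t + 1)) μ := fun t =>
    Integrable.of_bound (hXm' t) 1 (Filter.Eventually.of_forall fun ω => (hXabs t ω).le)
  have hWint : ∀ t, Integrable (W t) μ := by
    intro t
    induction t with
    | zero =>
      have : W 0 = fun _ => (1 : ℝ) := funext hW0
      rw [this]; exact integrable_const _
    | succ t ih =>
      have : W (t + 1) = fun ω => (W t ω + β (t + 1) ω) * (1 + b (t + 1))
          * (1 + lam (t + 1) ω * X (t + 1) ω) := funext (hW t)
      rw [this]
      refine Integrable.mul_bdd (c := 2) ((ih.add (hβ_int t)).mul_const _)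
        (aestronglyMeasurable_const.add ((hlm' t).mul (hXm' t)))
        (Filter.Eventually.of_forall fun ω => ?_)
      have := hlabs t ω
      have h2 : |lam (t + 1) ω * X (t + 1) ω| ≤ 1 := by rw [abs_mul, hXabs]; linarith
      rw [Real.norm_eq_abs]
      rw [abs_le] at h2 ⊢
      constructor <;> linarith [h2.1, h2.2]
  have hBint : ∀ i, Integrable (fun ω => (1 + b (i + 1)) * max (β (i + 1) ω) 0) μ := fun i =>
    ((hβ_int i).pos_part).const_mul _
  have hBt : ∀ t, ∫ ω, ∑ i ∈ Finset.range t, (1 + b (i + 1)) * max (β (i + 1) ω) 0 ∂μ ≤ B := by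
    intro t
    rw [hB]
    exact le_ciSup hbdd t
  have hCt : ∀ t, ∑ i ∈ Finset.range t, b (i + 1) ≤ C := by
    intro t
    rw [hC]
    exact hsummable.sum_le_tsum _ (fun i _ => hb_nonneg i)
  have hB0 : 0 ≤ B := by simpa using hBt 0
  have hC0 : 0 ≤ C := by simpa using hCt 0
  -- key bound for fixed level
  have key : ∀ y : ℝ, 0 < y → μ {ω | ∃ t, y ≤ W t ω} ≤ ENNReal.ofReal ((1 + B) / y + C) := by
    intro y hy
    have hMm : ∀ t, StronglyMeasurable[ℱ t] (stoppedW W y t) := by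
      intro t
      induction t with
      | zero => exact hWm 0
      | succ t ih =>
        have ih' := ih.mono (ℱ.mono (Nat.le_succ t))
        exact StronglyMeasurable.ite (measurableSet_le measurable_const ih'.measurable)
          ih' (hWm (t + 1))
    have hMnn : ∀ t ω, 0 ≤ stoppedW W y t ω := by
      intro t ω
      induction t with
      | zero => exact hWnn 0 ω
      | succ t ih =>
        rw [stoppedW_succ]
        split_ifs
        · exact ih
        · exact hWnn _ _
    have hMint : ∀ t, Integrable (stoppedW W y t) μ := by
      intro t
      induction t with
      | zero => exact hWint 0
      | succ t ih =>
        refine (ih.add (hWint (t + 1))).mono'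
          ((hMm (t + 1)).mono (ℱ.le _)).aestronglyMeasurable
          (Filter.Eventually.of_forall fun ω => ?_)
        rw [Real.norm_eq_abs, abs_of_nonneg (hMnn _ _), stoppedW_succ, Pi.add_apply]
        have h1 := hMnn t ω
        have h2 := hWnn (t + 1) ω
        split_ifs <;> linarith
    have hstep : ∀ t, ∫ ω, stoppedW W y (t + 1) ω ∂μ ≤ ∫ ω, stoppedW W y t ω ∂μ
        + b (t + 1) * y + ∫ ω, (1 + b (t + 1)) * max (β (t + 1) ω) 0 ∂μ := by
      intro t
      let G : Ω → ℝ := fun ω => if y ≤ stoppedW W y t ω then 0 else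
        (W t ω + β (t + 1) ω) * (1 + b (t + 1)) * lam (t + 1) ω
      have hset : MeasurableSet[ℱ t] {ω | y ≤ stoppedW W y t ω} :=
        measurableSet_le measurable_const (hMm t).measurable
      have hGm : StronglyMeasurable[ℱ t] G :=
        StronglyMeasurable.ite hset stronglyMeasurable_const
          ((((hWm t).add (hβ_pred t)).mul stronglyMeasurable_const).mul (hlam_pred t))
      have hGi : Integrable G μ := by
        have h1 : Integrable (fun ω => (W t ω + β (t + 1) ω) * (1 + b (t + 1))) μ :=
          ((hWint t).add (hβ_int t)).mul_const _
        refine h1.mono (hGm.mono (ℱ.le _)).aestronglyMeasurable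
          (Filter.Eventually.of_forall fun ω => ?_)
        simp only [G, Real.norm_eq_abs]
        split_ifs
        · rw [abs_zero]; exact abs_nonneg _
        · rw [abs_mul _ (lam (t + 1) ω)]
          exact mul_le_of_le_one_right (abs_nonneg _) (hlabs t ω)
      have hGXi : Integrable (fun ω => G ω * X (t + 1) ω) μ :=
        Integrable.mul_bdd (c := 1) hGi (hXm' t)
          (Filter.Eventually.of_forall fun ω => (hXabs t ω).le)
      have hG0 := integral_mul_eq_zero_aux (ℱ.le t) G (X (t + 1)) hGm hGXi (hXint t) (hX_cond t)
      have hpt : ∀ ω, stoppedW W y (t + 1) ω ≤ stoppedW W y t ω + b (t + 1) * y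
          + (1 + b (t + 1)) * max (β (t + 1) ω) 0 + G ω * X (t + 1) ω := by
        intro ω
        have hb := hb_nonneg t
        have h1 : 0 ≤ (1 + b (t + 1)) * max (β (t + 1) ω) 0 :=
          mul_nonneg (by linarith) (le_max_right _ _)
        have h2 : (1 + b (t + 1)) * β (t + 1) ω ≤ (1 + b (t + 1)) * max (β (t + 1) ω) 0 :=
          mul_le_mul_of_nonneg_left (le_max_left _ _) (by linarith)
        have h3 : 0 ≤ b (t + 1) * y := mul_nonneg hb hy.le
        rw [stoppedW_succ]
        by_cases hc : y ≤ stoppedW W y t ω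
        · simp only [G, if_pos hc]
          linarith
        · simp only [G, if_neg hc]
          have he := stoppedW_eq W y t ω hc
          rw [he] at hc ⊢
          push Not at hc
          have h4 : b (t + 1) * W t ω ≤ b (t + 1) * y := mul_le_mul_of_nonneg_left hc.le hb
          rw [hW]
          linarith
      calc ∫ ω, stoppedW W y (t + 1) ω ∂μ
          ≤ ∫ ω, (stoppedW W y t ω + b (t + 1) * y
          + (1 + b (t + 1)) * max (β (t + 1) ω) 0 + G ω * X (t + 1) ω) ∂μ :=
            integral_mono (hMint _) ((((hMint t).add (integrable_const _)).add (hBint t)).add hGXi)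
              hpt
        _ = _ := by
          have i1 : Integrable (fun ω => stoppedW W y t ω + b (t + 1) * y) μ :=
            (hMint t).add (integrable_const _)
          have i2 : Integrable (fun ω => stoppedW W y t ω + b (t + 1) * y
              + (1 + b (t + 1)) * max (β (t + 1) ω) 0) μ := i1.add (hBint t)
          rw [integral_add i2 hGXi, integral_add i1 (hBint t),
            integral_add (hMint t) (integrable_const _), hG0]
          simp
    have hEM : ∀ t, ∫ ω, stoppedW W y t ω ∂μ ≤ 1 + (∑ i ∈ Finset.range t, b (i + 1)) * y
        + ∫ ω, ∑ i ∈ Finset.range t, (1 + b (i + 1)) * max (β (i + 1) ω) 0 ∂μ := by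
      intro t
      induction t with
      | zero =>
        have : stoppedW W y 0 = fun _ => (1 : ℝ) := funext hW0
        simp [this]
      | succ t ih =>
        rw [integral_finsetSum _ (fun i _ => hBint i)] at ih ⊢
        rw [Finset.sum_range_succ, Finset.sum_range_succ]
        linarith [hstep t]
    have hPt : ∀ t, μ {ω | y ≤ stoppedW W y t ω} ≤ ENNReal.ofReal ((1 + B) / y + C) := by
      intro t
      have hmk := mul_meas_ge_le_integral_of_nonneg
        (Filter.Eventually.of_forall (hMnn t)) (hMint t) y
      have h1 : y * μ.real {ω | y ≤ stoppedW W y t ω} ≤ 1 + C * y + B := by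
        have := mul_le_mul_of_nonneg_right (hCt t) hy.le
        linarith [hEM t, hBt t]
      rw [← ofReal_measureReal]
      apply ENNReal.ofReal_le_ofReal
      have h2 : (1 + B) / y + C = (1 + C * y + B) / y := by field_simp; ring
      rw [h2, le_div_iff₀ hy]
      linarith
    have hun : {ω | ∃ t, y ≤ W t ω} ⊆ ⋃ t, {ω | y ≤ stoppedW W y t ω} := by
      rintro ω ⟨t, ht⟩
      exact Set.mem_iUnion.2 ⟨t, stoppedW_ge W y t ω ht⟩
    refine (measure_mono hun).trans ?_
    have hmono : Monotone fun t => {ω | y ≤ stoppedW W y t ω} :=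
      fun s t hst ω h => stoppedW_mono W y s t hst ω h
    rw [hmono.measure_iUnion]
    exact iSup_le hPt
  intro x hx
  have hev : ∀ᶠ y in nhdsWithin x (Set.Iio x),
      μ {ω | (x : EReal) ≤ ⨆ t, (W t ω : EReal)} ≤ ENNReal.ofReal ((1 + B) / y + C) := by
    filter_upwards [Ioo_mem_nhdsLT hx] with y hy
    refine (measure_mono ?_).trans (key y hy.1)
    intro ω hω
    have : (y : EReal) < ⨆ t, (W t ω : EReal) :=
      lt_of_lt_of_le (EReal.coe_lt_coe_iff.2 hy.2) hω
    obtain ⟨t, ht⟩ := lt_iSup_iff.1 this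
    exact ⟨t, (EReal.coe_lt_coe_iff.1 ht).le⟩
  have hlim : Filter.Tendsto (fun y : ℝ => ENNReal.ofReal ((1 + B) / y + C))
      (nhdsWithin x (Set.Iio x)) (nhds (ENNReal.ofReal ((1 + B) / x + C))) := by
    apply ENNReal.tendsto_ofReal
    have : ContinuousAt (fun y : ℝ => (1 + B) / y + C) x :=
      (continuousAt_const.div continuousAt_id hx.ne').add continuousAt_const
    exact this.tendsto.mono_left nhdsWithin_le_nhds
  exact ge_of_tendsto hlim hev
end

section
/- In the mispriced betting game with deterministic bonus rates b_t ≥ 0 and compound interest liabilities L_0 = 0, L_t = (1 + b_t)(L_{t−1} + β_t), set N_t = W_t − L_t and let Π_t = (1 + b_1)···(1 + b_t) (Π_0 = 1). Then the adjusted wealth W'_t = W_t/Π_t decomposes as W'_t = N'_t + L'_t, where the adjusted net wealth N'_t = N_t/Π_t is a martingale with respect to {ℱ_t} under P and the adjusted liabilities L'_t = L_t/Π_t is a predictable process with L'_0 = 0; i.e., this is the Doob decomposition of {W'_t}. -/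
open MeasureTheory

/-- In the mispriced betting game with compound interest liabilities
`L_t = (1 + b_t)(L_{t-1} + β_t)` and `Π_t = (1 + b_1)⋯(1 + b_t)`, the adjusted wealth
`W'_t = W_t / Π_t` decomposes as `W'_t = N'_t + L'_t`, where the adjusted net wealth
`N'_t = (W_t - L_t)/Π_t` is a martingale and the adjusted liabilities `L'_t = L_t / Π_t`
is predictable with `L'_0 = 0`: the Doob decomposition of `W'`. -/
theorem mispriced_adjusted_wealth_doob_decomposition
    {Ω : Type*} {mΩ : MeasurableSpace Ω} {μ : Measure Ω} [IsProbabilityMeasure μ]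
    (ℱ : Filtration ℕ mΩ)
    (X lam β W : ℕ → Ω → ℝ) (b : ℕ → ℝ)
    (hX_val : ∀ t ω, X (t + 1) ω = 1 ∨ X (t + 1) ω = -1)
    (hX_meas : ∀ t, StronglyMeasurable[ℱ (t + 1)] (X (t + 1)))
    (hX_cond : ∀ t, μ[X (t + 1) | ℱ t] =ᵐ[μ] 0)
    (hlam_pred : ∀ t, StronglyMeasurable[ℱ t] (lam (t + 1)))
    (hlam_bdd : ∀ t ω, lam (t + 1) ω ∈ Set.Icc (-1 : ℝ) 1)
    (hβ_pred : ∀ t, StronglyMeasurable[ℱ t] (β (t + 1)))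
    (hβ_int : ∀ t, Integrable (β (t + 1)) μ)
    (hβ_lb : ∀ t ω, -(W t ω) ≤ β (t + 1) ω)
    (hb_nonneg : ∀ t, 0 ≤ b (t + 1))
    (hW0 : ∀ ω, W 0 ω = 1)
    (hW : ∀ t ω, W (t + 1) ω
      = (W t ω + β (t + 1) ω) * (1 + b (t + 1)) * (1 + lam (t + 1) ω * X (t + 1) ω))
    (L N' L' W' : ℕ → Ω → ℝ)
    (hL0 : ∀ ω, L 0 ω = 0)
    (hLrec : ∀ t ω, L (t + 1) ω = (1 + b (t + 1)) * (L t ω + β (t + 1) ω))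
    (hN' : ∀ t ω, N' t ω = (W t ω - L t ω) / ∏ i ∈ Finset.range t, (1 + b (i + 1)))
    (hL' : ∀ t ω, L' t ω = L t ω / ∏ i ∈ Finset.range t, (1 + b (i + 1)))
    (hW' : ∀ t ω, W' t ω = W t ω / ∏ i ∈ Finset.range t, (1 + b (i + 1))) :
    Martingale N' ℱ μ ∧ (∀ ω, L' 0 ω = 0) ∧
      (∀ t, StronglyMeasurable[ℱ t] (L' (t + 1))) ∧
      (∀ t ω, W' t ω = N' t ω + L' t ω) := by
  have hP : ∀ t, (∏ i ∈ Finset.range t, (1 + b (i + 1))) ≠ 0 := fun t =>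
    Finset.prod_ne_zero_iff.mpr fun i _ => by have := hb_nonneg i; positivity
  have hLm : ∀ t, StronglyMeasurable[ℱ t] (L t) ∧ StronglyMeasurable[ℱ t] (L (t + 1)) := by
    have key : ∀ t, StronglyMeasurable[ℱ t] (L t) → StronglyMeasurable[ℱ t] (L (t + 1)) := by
      intro t h
      rw [show L (t + 1) = fun ω => (1 + b (t + 1)) * (L t ω + β (t + 1) ω) from
        funext (hLrec t)]
      exact (h.add (hβ_pred t)).const_mul _
    intro t
    induction t with
    | zero =>
      have h0 : StronglyMeasurable[ℱ 0] (L 0) := by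
        rw [show L 0 = fun _ => (0 : ℝ) from funext hL0]
        exact stronglyMeasurable_const
      exact ⟨h0, key 0 h0⟩
    | succ t ih =>
      have h1 := ih.2.mono (ℱ.mono (Nat.le_succ t))
      exact ⟨h1, key _ h1⟩
  have hLi : ∀ t, Integrable (L t) μ := by
    intro t
    induction t with
    | zero =>
      rw [show L 0 = fun _ => (0 : ℝ) from funext hL0]
      exact integrable_const _
    | succ t ih =>
      rw [show L (t + 1) = fun ω => (1 + b (t + 1)) * (L t ω + β (t + 1) ω) from
        funext (hLrec t)]
      exact (ih.add (hβ_int t)).const_mul _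
  have hWm : ∀ t, StronglyMeasurable[ℱ t] (W t) := by
    intro t
    induction t with
    | zero =>
      rw [show W 0 = fun _ => (1 : ℝ) from funext hW0]
      exact stronglyMeasurable_const
    | succ t ih =>
      rw [show W (t + 1) = fun ω => (W t ω + β (t + 1) ω) * (1 + b (t + 1)) *
        (1 + lam (t + 1) ω * X (t + 1) ω) from funext (hW t)]
      have hle := ℱ.mono (Nat.le_succ t)
      exact (((ih.mono hle).add ((hβ_pred t).mono hle)).mul_const _).mul
        (stronglyMeasurable_const.add (((hlam_pred t).mono hle).mul (hX_meas t)))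
  have hXi : ∀ t, Integrable (X (t + 1)) μ := fun t =>
    Integrable.of_bound ((hX_meas t).mono (ℱ.le _)).aestronglyMeasurable 1
      (Filter.Eventually.of_forall fun ω => by
        rcases hX_val t ω with h | h <;> simp [h])
  have hprod : ∀ t (f : Ω → ℝ), Integrable f μ →
      Integrable (fun ω => f ω * (lam (t + 1) ω * X (t + 1) ω)) μ := by
    intro t f hf
    refine hf.mul_bdd (c := 1) ((((hlam_pred t).mono (ℱ.le _)).mul
      ((hX_meas t).mono (ℱ.le _))).aestronglyMeasurable)
      (Filter.Eventually.of_forall fun ω => ?_)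
    have h1 : |lam (t + 1) ω| ≤ 1 := abs_le.mpr (hlam_bdd t ω)
    rcases hX_val t ω with h | h <;> simpa [h] using h1
  have hWi : ∀ t, Integrable (W t) μ := by
    intro t
    induction t with
    | zero =>
      rw [show W 0 = fun _ => (1 : ℝ) from funext hW0]
      exact integrable_const _
    | succ t ih =>
      have h1 : Integrable (fun ω => (W t ω + β (t + 1) ω) * (1 + b (t + 1))) μ :=
        (ih.add (hβ_int t)).mul_const _
      refine (h1.add (hprod t _ h1)).congr (Filter.Eventually.of_forall fun ω => ?_)
      simp only [Pi.add_apply, hW]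
      ring
  have hN'e : ∀ t, N' t = fun ω => (W t ω - L t ω) / ∏ i ∈ Finset.range t, (1 + b (i + 1)) :=
    fun t => funext (hN' t)
  refine ⟨martingale_of_condExp_sub_eq_zero_nat ?_ ?_ ?_, ?_, ?_, ?_⟩
  · intro t
    rw [hN'e]
    simp only [div_eq_mul_inv]
    exact ((hWm t).sub (hLm t).1).mul_const _
  · intro t
    rw [hN'e]
    exact ((hWi t).sub (hLi t)).div_const _
  · intro t
    set P := ∏ i ∈ Finset.range t, (1 + b (i + 1)) with hPdef
    have hinc : N' (t + 1) - N' t =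
        (fun ω => (W t ω + β (t + 1) ω) * lam (t + 1) ω * P⁻¹) * X (t + 1) := by
      funext ω
      have hp := hP t
      have hb : 1 + b (t + 1) ≠ 0 := by have := hb_nonneg t; positivity
      simp only [Pi.sub_apply, Pi.mul_apply, hN', Finset.prod_range_succ, hW, hLrec]
      rw [← hPdef] at hp ⊢
      field_simp
      ring
    have hm : StronglyMeasurable[ℱ t]
        (fun ω => (W t ω + β (t + 1) ω) * lam (t + 1) ω * P⁻¹) :=
      (((hWm t).add (hβ_pred t)).mul (hlam_pred t)).mul_const _
    have hi : Integrable
        ((fun ω => (W t ω + β (t + 1) ω) * lam (t + 1) ω * P⁻¹) * X (t + 1)) μ := by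
      refine (hprod t _ (((hWi t).add (hβ_int t)).mul_const P⁻¹)).congr
        (Filter.Eventually.of_forall fun ω => ?_)
      simp only [Pi.add_apply, Pi.mul_apply]
      ring
    rw [hinc]
    filter_upwards [condExp_mul_of_stronglyMeasurable_left hm hi (hXi t), hX_cond t]
      with ω h1 h2
    rw [h1, Pi.mul_apply, h2]
    simp
  · intro ω
    simp [hL', hL0]
  · intro t
    rw [show L' (t + 1) = fun ω => L (t + 1) ω / ∏ i ∈ Finset.range (t + 1), (1 + b (i + 1))
      from funext (hL' (t + 1))]
    simp only [div_eq_mul_inv]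
    exact (hLm t).2.mul_const _
  · intro t ω
    rw [hW', hN', hL']
    ring
end
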